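/- For any fixed real α > 0, the function s(φ) := Θ_{1/α}(φ)^α · Θ_α(φ) is strictly increasing on the interval (0, π), and moreover s(φ) → 0 as φ → 0⁺ and s(φ) → 1 as φ → π⁻. Consequently, for each fixed θ ∈ (0, π), the equation Θ_{1/α}(φ)^α · Θ_α(φ) = Θ_{1/α}(θ)^α · Θ_α(θ) has the unique solution φ = θ in (0, π). -/

import Mathlib

open Real Filter Set Topology

/-- `Th α t = sin t / ((1+α)·sin((π−t)/(1+α)))`. -/
noncomputable def Th (α t : ℝ) : ℝ :=
  Real.sin t / ((1 + α) * Real.sin ((Real.pi - t) / (1 + α)))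

/-- `sfun α φ = Θ_{1/α}(φ)^α · Θ_α(φ)`. -/
noncomputable def sfun (α φ : ℝ) : ℝ := (Th (1/α) φ) ^ α * Th α φ

/-!
With `c = 1 / (1 + α)` and `x = π - t`, the function `Θ_α` becomes `c * (sin x / sin (c * x))`,
where `0 < c < 1`. The sign of the derivative of this quotient is that of the Wronskian of `sin`
and `sin (c * ·)`. By Sturm's comparison argument that Wronskian is negative on `(0, π]`: it
vanishes at `0` and has derivative `-(1 - c ^ 2) * sin x * sin (c * x)`. Hence `Θ_α` increases
strictly, from `0` at `t = 0` to `1` as `t → π`, and so does the product of `Θ_α` with a positive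
power of `Θ_{1/α}`.
-/

section SinQuotient

variable {c x : ℝ}

/-- The Wronskian `f' * g - f * g'` of `f = sin` and `g = sin (c * ·)`, which is the numerator of
the derivative of `f / g`. -/
noncomputable def sinWronskian (c x : ℝ) : ℝ :=
  cos x * sin (c * x) - sin x * (c * cos (c * x))

lemma hasDerivAt_sin_const_mul (c x : ℝ) :
    HasDerivAt (fun y ↦ sin (c * y)) (c * cos (c * x)) x := by
  simpa [mul_comm] using (hasDerivAt_const_mul c (x := x)).sin

lemma hasDerivAt_sinWronskian (c x : ℝ) :
    HasDerivAt (sinWronskian c) (-((1 - c ^ 2) * (sin x * sin (c * x)))) x := by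
  have hcos : HasDerivAt (fun y ↦ c * cos (c * y)) (-(c ^ 2 * sin (c * x))) x :=
    ((hasDerivAt_const_mul c (x := x)).cos.const_mul c).congr_deriv (by ring)
  exact (((hasDerivAt_cos x).mul (hasDerivAt_sin_const_mul c x)).sub
    ((hasDerivAt_sin x).mul hcos)).congr_deriv (by ring)

lemma hasDerivAt_sin_div_sin_mul (h : sin (c * x) ≠ 0) :
    HasDerivAt (fun y ↦ sin y / sin (c * y)) (sinWronskian c x / sin (c * x) ^ 2) x :=
  (hasDerivAt_sin x).div (hasDerivAt_sin_const_mul c x) h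

lemma sin_mul_pos (hc : c ∈ Ioo 0 1) (hx : x ∈ Ioc 0 π) : 0 < sin (c * x) :=
  sin_pos_of_pos_of_lt_pi (mul_pos hc.1 hx.1) <|
    (mul_lt_of_lt_one_left hx.1 hc.2).trans_le hx.2

lemma strictAntiOn_sinWronskian (hc : c ∈ Ioo 0 1) :
    StrictAntiOn (sinWronskian c) (Icc 0 π) := by
  refine strictAntiOn_of_deriv_neg (convex_Icc 0 π)
    (fun x _ ↦ (hasDerivAt_sinWronskian c x).continuousAt.continuousWithinAt) fun x hx ↦ ?_
  rw [interior_Icc] at hx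
  have hc_sq : 0 < 1 - c ^ 2 := sub_pos.2 (pow_lt_one₀ hc.1.le hc.2 two_ne_zero)
  rw [(hasDerivAt_sinWronskian c x).deriv, neg_lt_zero]
  exact mul_pos hc_sq <|
    mul_pos (sin_pos_of_mem_Ioo hx) (sin_mul_pos hc (Ioo_subset_Ioc_self hx))

lemma sinWronskian_neg (hc : c ∈ Ioo 0 1) (hx : x ∈ Ioc 0 π) : sinWronskian c x < 0 :=
  calc sinWronskian c x
    _ < sinWronskian c 0 :=
      strictAntiOn_sinWronskian hc (left_mem_Icc.2 pi_nonneg) (Ioc_subset_Icc_self hx) hx.1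
    _ = 0 := by simp [sinWronskian]

lemma strictAntiOn_sin_div_sin_mul (hc : c ∈ Ioo 0 1) :
    StrictAntiOn (fun x ↦ sin x / sin (c * x)) (Ioc 0 π) := by
  have hderiv (x : ℝ) (hx : x ∈ Ioc 0 π) := hasDerivAt_sin_div_sin_mul (sin_mul_pos hc hx).ne'
  refine strictAntiOn_of_deriv_neg (convex_Ioc 0 π)
    (fun x hx ↦ (hderiv x hx).continuousAt.continuousWithinAt) fun x hx ↦ ?_
  have hx' : x ∈ Ioc 0 π := interior_subset hx
  rw [(hderiv x hx').deriv]
  exact div_neg_of_neg_of_pos (sinWronskian_neg hc hx') (pow_pos (sin_mul_pos hc hx') 2)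

lemma tendsto_sin_div_sin_mul_nhdsNE_zero (hc : c ≠ 0) :
    Tendsto (fun x ↦ sin x / sin (c * x)) (𝓝[≠] 0) (𝓝 c⁻¹) := by
  have hsinc : ContinuousAt (fun x ↦ c⁻¹ * (sinc x / sinc (c * x))) 0 := by
    have := continuous_sinc
    exact continuousAt_const.mul (.div (by fun_prop) (by fun_prop) (by simp))
  have hlim : Tendsto (fun x ↦ c⁻¹ * (sinc x / sinc (c * x))) (𝓝[≠] 0) (𝓝 c⁻¹) := by
    simpa using hsinc.tendsto.mono_left nhdsWithin_le_nhds
  refine hlim.congr' ?_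
  filter_upwards [self_mem_nhdsWithin] with x hx
  rw [sinc_of_ne_zero hx, sinc_of_ne_zero (mul_ne_zero hc hx), div_div_div_eq, mul_comm (sin x),
    mul_div_mul_comm, mul_div_cancel_right₀ c hx, inv_mul_cancel_left₀ hc]

end SinQuotient

section Theta

variable {α t : ℝ}

lemma Th_eq_mul_sin_div_sin_mul (α t : ℝ) :
    Th α t = (1 + α)⁻¹ * (sin (π - t) / sin ((1 + α)⁻¹ * (π - t))) := by
  rw [Th, sin_pi_sub, div_eq_inv_mul (π - t), ← div_div, div_eq_inv_mul (sin t), mul_div_assoc]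

@[simp]
lemma Th_zero (α : ℝ) : Th α 0 = 0 := by
  simp [Th]

lemma inv_one_add_mem_Ioo (hα : 0 < α) : (1 + α)⁻¹ ∈ Ioo 0 1 :=
  ⟨by positivity, inv_lt_one_of_one_lt₀ (lt_add_of_pos_right 1 hα)⟩

lemma strictMonoOn_Th (hα : 0 < α) : StrictMonoOn (Th α) (Ico 0 π) := by
  intro s hs t ht hst
  have hc := inv_one_add_mem_Ioo hα
  have hmem {u : ℝ} (hu : u ∈ Ico 0 π) : π - u ∈ Ioc 0 π :=
    ⟨sub_pos.2 hu.2, sub_le_self π hu.1⟩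
  rw [Th_eq_mul_sin_div_sin_mul, Th_eq_mul_sin_div_sin_mul]
  exact mul_lt_mul_of_pos_left
    (strictAntiOn_sin_div_sin_mul hc (hmem ht) (hmem hs) (sub_lt_sub_left hst π)) hc.1

lemma Th_nonneg (hα : 0 < α) (ht : t ∈ Ico 0 π) : 0 ≤ Th α t :=
  calc 0 = Th α 0 := (Th_zero α).symm
    _ ≤ Th α t := (strictMonoOn_Th hα).monotoneOn (left_mem_Ico.2 pi_pos) ht ht.1

lemma tendsto_Th_nhds_zero (hα : 0 < α) : Tendsto (Th α) (𝓝 0) (𝓝 0) := by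
  have hsin : 0 < sin ((π - 0) / (1 + α)) := by
    simpa [div_eq_inv_mul] using sin_mul_pos (inv_one_add_mem_Ioo hα) (right_mem_Ioc.2 pi_pos)
  have hcont : ContinuousAt (Th α) 0 :=
    ContinuousAt.div (by fun_prop) (by fun_prop) (by positivity)
  simpa using hcont.tendsto

lemma tendsto_Th_nhdsNE_pi (hα : 1 + α ≠ 0) : Tendsto (Th α) (𝓝[≠] π) (𝓝 1) := by
  have hsub : Tendsto (fun t ↦ π - t) (𝓝[≠] π) (𝓝[≠] 0) := by
    refine tendsto_nhdsWithin_iff.2 ⟨?_, ?_⟩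
    · have hcont : Continuous fun t ↦ π - t := by fun_prop
      simpa using (hcont.tendsto π).mono_left nhdsWithin_le_nhds
    · filter_upwards [self_mem_nhdsWithin] with t ht using sub_ne_zero.2 (Ne.symm ht)
  have hquot := (tendsto_sin_div_sin_mul_nhdsNE_zero (inv_ne_zero hα)).comp hsub
  have hlim := hquot.const_mul (1 + α)⁻¹
  rw [inv_inv, inv_mul_cancel₀ hα] at hlim
  exact hlim.congr fun t ↦ (Th_eq_mul_sin_div_sin_mul α t).symm

lemma strictMonoOn_sfun (hα : 0 < α) : StrictMonoOn (sfun α) (Ico 0 π) := by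
  intro s hs t ht hst
  have hα' : 0 < 1 / α := one_div_pos.2 hα
  have hpow : Th (1 / α) s ^ α < Th (1 / α) t ^ α :=
    rpow_lt_rpow (Th_nonneg hα' hs) (strictMonoOn_Th hα' hs ht hst) hα
  exact mul_lt_mul'' hpow (strictMonoOn_Th hα hs ht hst)
    (rpow_nonneg (Th_nonneg hα' hs) α) (Th_nonneg hα hs)

lemma tendsto_sfun {l : Filter ℝ} {a b : ℝ} (hα : 0 ≤ α) (ha : Tendsto (Th (1 / α)) l (𝓝 a))
    (hb : Tendsto (Th α) l (𝓝 b)) : Tendsto (sfun α) l (𝓝 (a ^ α * b)) :=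
  (ha.rpow_const (.inr hα)).mul hb

lemma tendsto_sfun_nhds_zero (hα : 0 < α) : Tendsto (sfun α) (𝓝 0) (𝓝 0) := by
  simpa using
    tendsto_sfun hα.le (tendsto_Th_nhds_zero (one_div_pos.2 hα)) (tendsto_Th_nhds_zero hα)

lemma tendsto_sfun_nhdsNE_pi (hα : 0 < α) : Tendsto (sfun α) (𝓝[≠] π) (𝓝 1) := by
  simpa using tendsto_sfun hα.le (tendsto_Th_nhdsNE_pi (α := 1 / α) (by positivity))
    (tendsto_Th_nhdsNE_pi (by positivity))

end Theta

theorem stmt4 (α : ℝ) (hα : 0 < α) :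
    StrictMonoOn (sfun α) (Set.Ioo 0 Real.pi) ∧
    Tendsto (sfun α) (𝓝[>] (0:ℝ)) (𝓝 0) ∧
    Tendsto (sfun α) (𝓝[<] Real.pi) (𝓝 1) ∧
    ∀ θ ∈ Set.Ioo 0 Real.pi, ∀ φ ∈ Set.Ioo 0 Real.pi,
      ((Th (1/α) φ) ^ α * Th α φ = (Th (1/α) θ) ^ α * Th α θ ↔ φ = θ) := by
  have hmono : StrictMonoOn (sfun α) (Ioo 0 π) :=
    (strictMonoOn_sfun hα).mono Ioo_subset_Ico_self
  exact ⟨hmono,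
    (tendsto_sfun_nhds_zero hα).mono_left nhdsWithin_le_nhds,
    (tendsto_sfun_nhdsNE_pi hα).mono_left (nhdsLT_le_nhdsNE π),
    fun θ hθ φ hφ ↦ hmono.injOn.eq_iff hφ hθ⟩
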